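/- Let k ≥ 1, m = 2k+1, let ρ be a d×d density matrix, and let A₀, …, A_{m−1} be d×d complex matrices, each Hermitian and unitary (A_iᴴ = A_i and A_i² = 1), such that A_i·A_j = −A_j·A_i whenever j ≡ i ± 1 (mod m), and A_i·A_j = A_j·A_i for all other pairs i ≠ j. Then Σ_{i=0}^{m−1} ( Re tr(ρ·A_i) )² ≤ k. -/

import Mathlib

open Matrix ComplexOrder

namespace OddHole

theorem linalg (k : ℕ) (G : Matrix (Fin (2 * k + 1)) (Fin (2 * k + 1)) ℝ)
    (hG : Gᵀ = -G)
    (h : ∀ u v : Fin (2 * k + 1) → ℝ, 0 ≤ u ⬝ᵥ u + v ⬝ᵥ v + 2 * (u ⬝ᵥ (G *ᵥ v))) :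
    ∑ i, ∑ j, (G i j) ^ 2 ≤ 2 * (k : ℝ) := by
  have hdet : G.det = 0 := by
    have h1 : Gᵀ.det = (-G).det := by rw [hG]
    rw [det_transpose, det_neg] at h1
    simp [pow_succ, pow_mul] at h1
    linarith
  obtain ⟨w, hw0, hw⟩ := exists_mulVec_eq_zero_iff.mpr hdet
  have hww : 0 < w ⬝ᵥ w := by
    have h0 : 0 ≤ w ⬝ᵥ w := by
      unfold dotProduct; exact Finset.sum_nonneg fun i _ => mul_self_nonneg _
    rcases h0.lt_or_eq with h1 | h1
    · exact h1
    · exact absurd (dotProduct_self_eq_zero.mp h1.symm) hw0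
  have hc : ∀ x : Fin (2 * k + 1) → ℝ, (G *ᵥ x) ⬝ᵥ (G *ᵥ x) ≤ x ⬝ᵥ x := by
    intro x
    have := h (-(G *ᵥ x)) x
    simp only [neg_dotProduct, dotProduct_neg, neg_neg] at this
    linarith
  have hj : ∀ j, ∑ i, (G i j) ^ 2 ≤ 1 - (w j) ^ 2 / (w ⬝ᵥ w) := by
    intro j
    have h1 := hc (Pi.single j 1 - (w j / (w ⬝ᵥ w)) • w)
    rw [mulVec_sub, mulVec_smul, hw, smul_zero, sub_zero] at h1
    have e1 : (G *ᵥ Pi.single j 1) ⬝ᵥ (G *ᵥ Pi.single j 1) = ∑ i, (G i j) ^ 2 := by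
      simp [dotProduct, mulVec_single_one, pow_two]
    rw [e1] at h1
    refine h1.trans (le_of_eq ?_)
    simp only [sub_dotProduct, dotProduct_sub, smul_dotProduct, dotProduct_smul,
      single_dotProduct, dotProduct_single, smul_eq_mul, Pi.sub_apply, Pi.smul_apply, Pi.single_eq_same]
    field_simp
    ring
  rw [Finset.sum_comm]
  refine (Finset.sum_le_sum fun j _ => hj j).trans ?_
  rw [Finset.sum_sub_distrib, ← Finset.sum_div]
  have : ∑ i, (w i) ^ 2 = w ⬝ᵥ w := by simp [dotProduct, pow_two]
  rw [this, div_self hww.ne']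
  simp

variable {R : Type*} [Ring R] [StarRing R] [Algebra ℝ R] [StarModule ℝ R]

/-- ordered product `B j * ⋯ * B (j+l-1)` -/
def W (B : ℕ → R) (j : ℕ) : ℕ → R
  | 0 => 1
  | (l + 1) => W B j l * B (j + l)

theorem W_mul (B : ℕ → R) (j l : ℕ) : W B 0 j * W B j l = W B 0 (j + l) := by
  induction l with
  | zero => simp [W]
  | succ l ih => rw [← add_assoc]; simp only [W, zero_add]; rw [← mul_assoc, ih]

theorem W_unit (B : ℕ → R) (hs : ∀ n, star (B n) = B n) (hu : ∀ n, B n * B n = 1) (j l : ℕ) :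
    star (W B j l) * W B j l = 1 := by
  induction l with
  | zero => simp [W]
  | succ l ih =>
    simp only [W, star_mul, hs]
    rw [mul_assoc, ← mul_assoc (star _), ih, one_mul, hu]

theorem W_comm (B : ℕ → R) (s : ℕ → ℝ) (b : R) (j l : ℕ)
    (h : ∀ t < l, b * B (j + t) = s (j + t) • (B (j + t) * b)) :
    b * W B j l = (∏ t ∈ Finset.range l, s (j + t)) • (W B j l * b) := by
  induction l with
  | zero => simp [W]
  | succ l ih =>
    rw [Finset.prod_range_succ]
    simp only [W]
    rw [← mul_assoc, ih (fun t ht => h t (by omega)), smul_mul_assoc, mul_assoc,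
      h l (by omega), mul_smul_comm, smul_smul, mul_assoc]

theorem quad {m : ℕ} (φ : R →ₗ[ℝ] ℝ) (hpos : ∀ X, 0 ≤ φ (star X * X))
    (hstar : ∀ X, φ (star X) = φ X) (h1 : φ 1 = 1) (J : R)
    (hJ2 : star J * J = 1) (Q : Fin m → R) (hQ1 : ∀ i, star (Q i) * Q i = 1)
    (hQ : ∀ i j, i ≠ j → star (Q i) * Q j = - (star (Q j) * Q i)) (u v : Fin m → ℝ) :
    0 ≤ u ⬝ᵥ u + v ⬝ᵥ v + 2 * (u ⬝ᵥ (Matrix.of (fun i j => φ (star (Q i) * (J * Q j))) *ᵥ v)) := by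
  have hz : ∀ i j, φ (star (Q i) * Q j) = if i = j then 1 else 0 := by
    intro i j
    split_ifs with hij
    · subst hij; rw [hQ1, h1]
    · have e1 := hQ i j hij
      have e2 := hstar (star (Q i) * Q j)
      rw [star_mul, star_star] at e2
      rw [e1, map_neg] at e2
      rw [e1, map_neg]
      linarith
  have hd : ∀ (u v : Fin m → ℝ) (T : Fin m → R),
      φ (star (∑ i, u i • Q i) * (∑ j, v j • T j)) = ∑ i, ∑ j, u i * (v j * φ (star (Q i) * T j)) := by
    intro u v T
    simp only [star_sum, star_smul, Finset.sum_mul, Finset.mul_sum, map_sum, smul_mul_assoc,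
      mul_smul_comm, map_smul, smul_eq_mul, star_trivial]
    try rw [Finset.sum_comm]
    try (refine Finset.sum_congr rfl fun i _ => Finset.sum_congr rfl fun j _ => ?_; ring)
  have hself : ∀ u : Fin m → ℝ, φ (star (∑ i, u i • Q i) * (∑ j, u j • Q j)) = u ⬝ᵥ u := by
    intro u
    rw [hd]
    simp [hz, dotProduct]
  have hX := hpos ((∑ i, u i • Q i) + J * (∑ j, v j • Q j))
  set r := ∑ i, u i • Q i with hr
  set s := ∑ i, v i • Q i with hs
  have e : star (r + J * s) * (r + J * s)
      = star r * r + star s * s + (star r * (J * s) + star (star r * (J * s))) := by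
    simp only [star_add, star_mul, star_star, add_mul, mul_add]
    have : star s * star J * (J * s) = star s * s := by
      rw [mul_assoc, ← mul_assoc (star J), hJ2, one_mul]
    rw [this]; abel
  rw [e, map_add, map_add, map_add, hstar, hr, hself, hs, hself, Finset.mul_sum] at hX
  simp only [mul_smul_comm] at hX
  rw [hd] at hX
  have e3 : u ⬝ᵥ (Matrix.of (fun i j => φ (star (Q i) * (J * Q j))) *ᵥ v)
      = ∑ i, ∑ j, u i * (v j * φ (star (Q i) * (J * Q j))) := by
    simp only [dotProduct, mulVec, Finset.mul_sum, of_apply]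
    refine Finset.sum_congr rfl fun i _ => Finset.sum_congr rfl fun j _ => ?_
    ring
  rw [e3]
  linarith

theorem fin_ne (k : ℕ) (hk : 1 ≤ k) (i : Fin (2 * k + 1)) : i + 1 ≠ i - 1 := by
  intro h
  have h2 : (1 + 1 : Fin (2 * k + 1)) = 0 := by
    have h3 : i + 1 + 1 = i := by rw [h]; abel
    have h4 : i + (1 + 1) = i + 0 := by rw [← add_assoc, h3, add_zero]
    exact add_left_cancel h4
  have := congrArg Fin.val h2
  rw [Fin.val_add, Fin.val_one', Nat.mod_eq_of_lt (by omega : 1 < 2 * k + 1),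
    Nat.mod_eq_of_lt (by omega)] at this
  simp at this

theorem central (k : ℕ) (hk : 1 ≤ k) (A : Fin (2 * k + 1) → R)
    (hanti : ∀ i j : Fin (2 * k + 1), (j = i + 1 ∨ i = j + 1) →
      A i * A j = -(A j * A i))
    (hcomm : ∀ i j : Fin (2 * k + 1), i ≠ j → ¬(j = i + 1 ∨ i = j + 1) →
      A i * A j = A j * A i) (i : Fin (2 * k + 1)) :
    A i * W (fun n => A (Fin.ofNat (2 * k + 1) n)) 0 (2 * k + 1)
      = W (fun n => A (Fin.ofNat (2 * k + 1) n)) 0 (2 * k + 1) * A i := by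
  have hc := W_comm (fun n => A (Fin.ofNat (2 * k + 1) n))
    (fun n => (if Fin.ofNat (2 * k + 1) n = i + 1 then -1 else 1) *
      (if Fin.ofNat (2 * k + 1) n = i - 1 then -1 else 1)) (A i) 0 (2 * k + 1) (by
      intro t _
      rw [zero_add]
      generalize Fin.ofNat (2 * k + 1) t = j
      by_cases h1 : j = i + 1
      · have h2 : j ≠ i - 1 := by rw [h1]; exact fin_ne k hk i
        rw [hanti i j (Or.inl h1), if_pos h1, if_neg h2]; simp
      · by_cases h2 : j = i - 1
        · rw [hanti i j (Or.inr (by rw [h2]; abel)), if_pos h2, if_neg h1]; simp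
        · rw [if_neg h1, if_neg h2]
          by_cases h3 : i = j
          · subst h3; simp
          · rw [hcomm i j h3 (by
              rintro (h | h)
              · exact h1 h
              · exact h2 (by rw [h]; abel))]
            simp)
  rw [hc, Finset.prod_range]
  simp only [zero_add, Fin.ofNat_eq_cast, Fin.cast_val_eq_self, Finset.prod_mul_distrib]
  simp

theorem W_star (k : ℕ) (B : ℕ → R) (hs : ∀ n, star (B n) = B n)
    (h1 : ∀ n, n + 1 ≤ 2 * k → B (n + 1) * B n = - (B n * B (n + 1)))
    (h2 : ∀ a b, a < 2 * k → b + 2 ≤ a → B a * B b = B b * B a) (j l : ℕ)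
    (hjl : j + l + 1 ≤ 2 * k) : star (W B j (l + 1)) = (-1 : ℝ) ^ l • W B j (l + 1) := by
  induction l with
  | zero => simp [W, hs]
  | succ l ih =>
    have e : B (j + (l + 1)) * W B j (l + 1) = - (W B j (l + 1) * B (j + (l + 1))) := by
      have hc := W_comm B (fun _ => 1) (B (j + (l + 1))) j l (by
        intro t ht
        rw [one_smul]
        exact h2 _ _ (by omega) (by omega))
      simp only [Finset.prod_const_one, one_smul] at hc
      rw [W, ← mul_assoc, hc, mul_assoc, ← add_assoc, h1 _ (by omega)]
      simp [mul_assoc]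
    rw [W, star_mul, hs, ih (by omega), mul_smul_comm, e, pow_succ]
    simp

theorem core (k : ℕ) (hk : 1 ≤ k) (φ : R →ₗ[ℝ] ℝ) (hpos : ∀ X, 0 ≤ φ (star X * X))
    (hstar : ∀ X, φ (star X) = φ X) (hφ1 : φ 1 = 1) (A : Fin (2 * k + 1) → R)
    (hherm : ∀ i, star (A i) = A i) (hunit : ∀ i, A i * A i = 1)
    (hanti : ∀ i j : Fin (2 * k + 1), (j = i + 1 ∨ i = j + 1) →
      A i * A j = -(A j * A i))
    (hcomm : ∀ i j : Fin (2 * k + 1), i ≠ j → ¬(j = i + 1 ∨ i = j + 1) →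
      A i * A j = A j * A i) : ∑ i, (φ (A i)) ^ 2 ≤ (k : ℝ) := by
  have hcen := central k hk A hanti hcomm
  obtain ⟨B, hB⟩ : ∃ B : ℕ → R, B = fun n => A (Fin.ofNat (2 * k + 1) n) := ⟨_, rfl⟩
  rw [← hB] at hcen
  have hBv : ∀ i : Fin (2 * k + 1), B i = A i := by intro i; rw [hB]; simp
  have hs : ∀ n, star (B n) = B n := by intro n; rw [hB]; exact hherm _
  have hu : ∀ n, B n * B n = 1 := by intro n; rw [hB]; exact hunit _
  have h1 : ∀ n, n + 1 ≤ 2 * k → B (n + 1) * B n = - (B n * B (n + 1)) := by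
    intro n hn
    rw [hB]
    refine hanti _ _ (Or.inr ?_)
    apply Fin.ext
    simp [Fin.val_add, Fin.ofNat]
  have h2 : ∀ a b, a < 2 * k → b + 2 ≤ a → B a * B b = B b * B a := by
    intro a b ha hb
    have ea := hBv ⟨a, by omega⟩
    have eb := hBv ⟨b, by omega⟩
    simp only at ea eb
    rw [ea, eb]
    apply hcomm
    · intro h; simp at h; omega
    · rintro (h | h)
      · have := congrArg Fin.val h
        rw [Fin.val_add_one_of_lt' (by simpa using by omega)] at this
        simp at this; omega
      · have := congrArg Fin.val h
        rw [Fin.val_add_one_of_lt' (by simpa using by omega)] at this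
        simp at this; omega
  obtain ⟨J, hJ⟩ : ∃ J : R, J = W B 0 (2 * k + 1) := ⟨_, rfl⟩
  rw [← hJ] at hcen
  have hJu : star J * J = 1 := by rw [hJ]; exact W_unit B hs hu _ _
  have hJB : ∀ n, Commute J (B n) := by
    intro n; rw [hB]; exact (hcen _).symm
  have hJW : ∀ j l, Commute J (W B j l) := by
    intro j l
    induction l with
    | zero => exact Commute.one_right _
    | succ l ih => exact ih.mul_right (hJB _)
  have hJe : J = W B 0 (2 * k) * B (2 * k) := by rw [hJ, W, zero_add]
  have hWe : W B 0 (2 * k) = J * B (2 * k) := by rw [hJe, mul_assoc, hu, mul_one]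
  have hJs : star J = - J := by
    obtain ⟨q, rfl⟩ : ∃ q, k = q + 1 := ⟨k - 1, by omega⟩
    have e := W_star (q + 1) B hs h1 h2 0 (2 * q + 1) (by omega)
    have e2 : 2 * q + 1 + 1 = 2 * (q + 1) := by ring
    rw [e2, pow_succ, pow_mul] at e
    simp only [even_two, Even.neg_pow, one_pow, one_mul, neg_smul, one_smul] at e
    conv_lhs => rw [hJe]
    rw [star_mul, hs, e, hWe, mul_neg, ← mul_assoc, ← (hJB _).eq, mul_assoc, hu, mul_one]
  have hJJ : J * J = -1 := by
    rw [hJs] at hJu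
    rw [← hJu]; simp
  obtain ⟨Q, hQ⟩ : ∃ Q : ℕ → R, Q = fun j => J ^ j * W B 0 j := ⟨_, rfl⟩
  have hQl : ∀ j l, star (Q j) * Q (j + l) = J ^ l * W B j l := by
    intro j l
    have hp : star (J ^ j) * J ^ j = 1 := by
      induction j with
      | zero => simp
      | succ j ih =>
        rw [pow_succ', star_mul, mul_assoc, ← mul_assoc (star J), hJu, one_mul, ih]
    have : Q (j + l) = J ^ j * (J ^ l * W B 0 (j + l)) := by
      rw [hQ]; simp only; rw [pow_add, mul_assoc]
    rw [this, ← W_mul, ← mul_assoc (J ^ l), ((hJW 0 j).pow_left l).eq, hQ]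
    simp only [star_mul]
    calc _ = star (W B 0 j) * (star (J ^ j) * J ^ j) * (W B 0 j * (J ^ l * W B j l)) := by
          simp only [mul_assoc]
      _ = (star (W B 0 j) * W B 0 j) * (J ^ l * W B j l) := by
          rw [hp]; simp only [mul_assoc, mul_one, one_mul]
      _ = _ := by rw [W_unit B hs hu, one_mul]
  have hQa : ∀ j l, j + l + 1 ≤ 2 * k →
      star (Q (j + (l + 1))) * Q j = - (star (Q j) * Q (j + (l + 1))) := by
    intro j l hjl
    have e : star (Q (j + (l + 1))) * Q j = star (star (Q j) * Q (j + (l + 1))) := by simp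
    rw [e, hQl, star_mul, W_star k B hs h1 h2 j l hjl, star_pow, hJs,
      ← neg_one_mul J, (Commute.neg_one_left J).mul_pow, ((hJW j (l + 1)).pow_left (l + 1)).eq]
    rw [smul_mul_assoc]
    rcases Nat.even_or_odd l with h | h
    · have h' : Odd (l + 1) := h.add_one
      rw [h.neg_one_pow, h'.neg_one_pow]; simp
    · have h' : Even (l + 1) := h.add_one
      rw [h.neg_one_pow, h'.neg_one_pow]; simp
  have hQ1 : ∀ i : Fin (2 * k + 1), star (Q i) * Q i = 1 := by
    intro i; simpa [W] using hQl i 0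
  have hQ2 : ∀ i j : Fin (2 * k + 1), i ≠ j → star (Q i) * Q j = - (star (Q j) * Q i) := by
    intro i j hij
    rcases lt_or_gt_of_ne hij with h | h
    · obtain ⟨l, hl⟩ : ∃ l, (j : ℕ) = i + (l + 1) := ⟨j - i - 1, by omega⟩
      have := hQa i l (by omega)
      rw [← hl] at this
      rw [this, neg_neg]
    · obtain ⟨l, hl⟩ : ∃ l, (i : ℕ) = j + (l + 1) := ⟨i - j - 1, by omega⟩
      have := hQa j l (by omega)
      rw [← hl] at this
      rw [this]
  have hquad := quad φ hpos hstar hφ1 J hJu (fun i : Fin (2 * k + 1) => Q i) hQ1 hQ2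
  obtain ⟨G, hG⟩ : ∃ G : Matrix (Fin (2 * k + 1)) (Fin (2 * k + 1)) ℝ,
    G = Matrix.of (fun i j : Fin (2 * k + 1) => φ (star (Q i) * (J * Q j))) := ⟨_, rfl⟩
  rw [← hG] at hquad
  have hGa : Gᵀ = -G := by
    ext i j
    rw [hG]
    simp only [transpose_apply, Matrix.neg_apply, of_apply]
    rw [← hstar]
    rw [star_mul, star_mul, star_star, hJs]
    simp [mul_assoc]
  have hlin := linalg k G hGa hquad
  have hGA : ∀ i, (G i (i + 1)) ^ 2 = (φ (A i)) ^ 2 := by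
    intro i
    have hJQ : ∀ j, Commute J (Q j) := by
      intro j
      rw [hQ]; exact ((Commute.refl J).pow_right _).mul_right (hJW _ _)
    by_cases hi : (i : ℕ) < 2 * k
    · have hv : ((i + 1 : Fin (2 * k + 1)) : ℕ) = i + 1 :=
        Fin.val_add_one_of_lt' (by omega)
      rw [hG, of_apply, hv, (hJQ _).eq, ← mul_assoc, hQl i 1]
      simp only [W, pow_one, one_mul, add_zero]
      rw [mul_assoc, ← (hJB _).eq, ← mul_assoc, hJJ, hBv]
      simp
    · have hi' : i = Fin.last (2 * k) := by
        apply Fin.ext; simp; omega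
      have hGs : G i (i + 1) = - G (i + 1) i := by
        have := congrFun (congrFun hGa (i + 1)) i
        simpa using this
      rw [hGs, neg_sq, hi', Fin.last_add_one, hG, of_apply, (hJQ _).eq, ← mul_assoc]
      have e := hQl 0 (2 * k)
      rw [zero_add] at e
      have hAl : A (Fin.last (2 * k)) = B (2 * k) := by rw [← hBv]; simp
      simp only [Fin.val_zero, Fin.val_last]
      rw [e, hAl, hWe, pow_mul, pow_two J, hJJ, mul_assoc, mul_assoc, ← (hJB _).eq,
        ← mul_assoc J, hJJ]
      rcases Nat.even_or_odd k with h | h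
      · rw [h.neg_one_pow]; simp
      · rw [h.neg_one_pow]; simp
  have hGA' : ∀ i, (G (i + 1) i) ^ 2 = (φ (A i)) ^ 2 := by
    intro i
    rw [← hGA]
    have := congrFun (congrFun hGa i) (i + 1)
    simp only [transpose_apply, Matrix.neg_apply] at this
    rw [this, neg_sq]
  have hrow : ∀ i, (G i (i + 1)) ^ 2 + (G i (i - 1)) ^ 2 ≤ ∑ j, (G i j) ^ 2 := by
    intro i
    rw [← Finset.sum_pair (f := fun j => (G i j) ^ 2) (fin_ne k hk i)]
    exact Finset.sum_le_sum_of_subset_of_nonneg (Finset.subset_univ _) fun _ _ _ => sq_nonneg _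
  have hsum := Finset.sum_le_sum fun i (_ : i ∈ Finset.univ) => hrow i
  rw [Finset.sum_add_distrib] at hsum
  have hre : ∑ i, (G i (i - 1)) ^ 2 = ∑ i, (G (i + 1) i) ^ 2 := by
    exact (Equiv.sum_comp (Equiv.addRight (1 : Fin (2 * k + 1))) _).symm.trans (by simp)
  rw [hre] at hsum
  simp only [hGA, hGA'] at hsum
  linarith

end OddHole

/-- Odd-hole uncertainty inequality: if Hermitian unitary observables
`A₀, …, A_{2k}` anticommute precisely for cyclically adjacent indices (mod `2k+1`) and
commute otherwise, then `Σᵢ (Re tr(ρAᵢ))² ≤ k` for every density matrix `ρ`. -/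
theorem odd_hole_uncertainty (k d : ℕ) (hk : 1 ≤ k)
    (ρ : Matrix (Fin d) (Fin d) ℂ) (hρ : ρ.PosSemidef) (htr : ρ.trace = 1)
    (A : Fin (2 * k + 1) → Matrix (Fin d) (Fin d) ℂ)
    (hherm : ∀ i, (A i)ᴴ = A i) (hunit : ∀ i, A i * A i = 1)
    (hanti : ∀ i j : Fin (2 * k + 1), (j = i + 1 ∨ i = j + 1) →
      A i * A j = -(A j * A i))
    (hcomm : ∀ i j : Fin (2 * k + 1), i ≠ j → ¬(j = i + 1 ∨ i = j + 1) →
      A i * A j = A j * A i) :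
    ∑ i, ((ρ * A i).trace.re) ^ 2 ≤ (k : ℝ) := by
  let φ : Matrix (Fin d) (Fin d) ℂ →ₗ[ℝ] ℝ :=
    { toFun := fun X => (ρ * X).trace.re
      map_add' := fun X Y => by simp [mul_add]
      map_smul' := fun c X => by simp }
  refine OddHole.core k hk φ ?_ ?_ ?_ A hherm hunit hanti hcomm
  · intro X
    change 0 ≤ (ρ * (Xᴴ * X)).trace.re
    rw [← mul_assoc, trace_mul_comm, ← mul_assoc]
    exact (Complex.le_def.mp (hρ.mul_mul_conjTranspose_same X).trace_nonneg).1
  · intro X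
    change (ρ * Xᴴ).trace.re = (ρ * X).trace.re
    have : ρ * Xᴴ = (X * ρ)ᴴ := by rw [conjTranspose_mul, hρ.isHermitian.eq]
    rw [this, trace_conjTranspose, trace_mul_comm]
    simp
  · change (ρ * 1).trace.re = 1
    rw [mul_one, htr]; simp
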